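/- Let S be a strata-connected subset of chambers of a hyperplane arrangement 𝓗 in general position in ℝ^d, let H_e intersect T_S, and set S⁺ := {C ∈ S : C ⊂ H_e⁺}, S⁻ := {C ∈ S : C ⊂ H_e⁻}. Let A ∈ supp(S) with e ∈ A and write A' := A ∖ {e}. If H_f bounds T_S(A), then either H_f bounds both T_{S⁺}(A') and T_{S⁻}(A'), or H_f bounds one of T_{S⁺}(A') and T_{S⁻}(A') and intersects the other. -/

import Mathlib

open Set Topology

noncomputable section

/-- A hyperplane arrangement of `n` affine hyperplanes in `ℝ^d`, given by
nonzero normal vectors and offsets: the `i`-th hyperplane is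
`{x | ∑ j, normal i j * x j = offset i}`. -/
structure Arrangement (d n : ℕ) where
  normal : Fin n → (Fin d → ℝ)
  offset : Fin n → ℝ
  normal_ne : ∀ i, normal i ≠ 0

/-- The thickening (regular open hull) `T_S` of a set `S` of chambers. -/
def thickening {d : ℕ} (S : Set (Set (Fin d → ℝ))) : Set (Fin d → ℝ) :=
  interior (closure (⋃ C ∈ S, C))

/-- The set of connected components of a subset `X` of a topological space. -/
def connComps {α : Type*} [TopologicalSpace α] (X : Set α) : Set (Set α) :=
  {c | ∃ x ∈ X, c = connectedComponentIn X x}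

namespace Arrangement

variable {d n : ℕ} (𝓗 : Arrangement d n)

/-- The `i`-th hyperplane of the arrangement. -/
def H (i : Fin n) : Set (Fin d → ℝ) := {x | ∑ j, 𝓗.normal i j * x j = 𝓗.offset i}

/-- The positive open half-space determined by the `i`-th hyperplane. -/
def pos (i : Fin n) : Set (Fin d → ℝ) := {x | 𝓗.offset i < ∑ j, 𝓗.normal i j * x j}

/-- The negative open half-space determined by the `i`-th hyperplane. -/
def neg (i : Fin n) : Set (Fin d → ℝ) := {x | ∑ j, 𝓗.normal i j * x j < 𝓗.offset i}

/-- The complement of the union of the hyperplanes. -/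
def free : Set (Fin d → ℝ) := {x | ∀ i, x ∉ 𝓗.H i}

/-- The chambers: connected components of the complement of the hyperplanes. -/
def chambers : Set (Set (Fin d → ℝ)) :=
  {C | ∃ x ∈ 𝓗.free, C = connectedComponentIn 𝓗.free x}

/-- General position: the normals of any `≤ d` hyperplanes are linearly independent
(so that their intersection is an affine subspace of the right dimension), and no
`d+1` hyperplanes have a common point. -/
def GeneralPosition : Prop :=
  (∀ A : Finset (Fin n), A.card ≤ d →
      LinearIndependent ℝ (fun i : A => 𝓗.normal i.1)) ∧
  (∀ A : Finset (Fin n), A.card = d + 1 → (⋂ i ∈ A, 𝓗.H i) = ∅)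

/-- Hyperplane `e` separates `C` from `C'`. -/
def Separates (e : Fin n) (C C' : Set (Fin d → ℝ)) : Prop :=
  (C ⊆ 𝓗.pos e ∧ C' ⊆ 𝓗.neg e) ∨ (C ⊆ 𝓗.neg e ∧ C' ⊆ 𝓗.pos e)

/-- Adjacency in the chamber graph: two chambers are adjacent iff they are separated
by exactly one hyperplane (equivalently, share a common facet). -/
def Adj (C C' : Set (Fin d → ℝ)) : Prop :=
  C ∈ 𝓗.chambers ∧ C' ∈ 𝓗.chambers ∧ ∃! e : Fin n, 𝓗.Separates e C C'

/-- The edge boundary of a set `S` of chambers, encoded as the set of ordered pairs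
`(C, C')` of adjacent chambers with `C ∈ S` and `C' ∉ S` (each boundary edge is thus
counted exactly once). -/
def edgeBoundary (S : Set (Set (Fin d → ℝ))) :
    Set ((Set (Fin d → ℝ)) × (Set (Fin d → ℝ))) :=
  {q | q.1 ∈ S ∧ q.2 ∉ S ∧ 𝓗.Adj q.1 q.2}

/-- The stratum `T_S(A) = T_S ∩ L_A`. -/
def stratum (S : Set (Set (Fin d → ℝ))) (A : Finset (Fin n)) : Set (Fin d → ℝ) :=
  thickening S ∩ ⋂ i ∈ A, 𝓗.H i

/-- The support of `S`: those `A` with nonempty stratum. -/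
def supp (S : Set (Set (Fin d → ℝ))) : Set (Finset (Fin n)) :=
  {A | (𝓗.stratum S A).Nonempty}

/-- `H_f` bounds the stratum `T_S(A)`: the stratum lies entirely in one of the open
half-spaces of `H_f`, and `H_f` meets the closure of the stratum within `L_A`. -/
def Bounds (f : Fin n) (S : Set (Set (Fin d → ℝ))) (A : Finset (Fin n)) : Prop :=
  (𝓗.stratum S A ⊆ 𝓗.pos f ∨ 𝓗.stratum S A ⊆ 𝓗.neg f) ∧
  (𝓗.H f ∩ closure (𝓗.stratum S A) ∩ ⋂ i ∈ A, 𝓗.H i).Nonempty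

/-- `S` is strata-connected if every nonempty stratum is connected. -/
def StrataConnected (S : Set (Set (Fin d → ℝ))) : Prop :=
  ∀ A ∈ 𝓗.supp S, IsConnected (𝓗.stratum S A)

end Arrangement

/-- The generalized binomial coefficient `C(x, i) = x(x-1)⋯(x-i+1)/i!`. -/
noncomputable def gchoose (x : ℝ) (i : ℕ) : ℝ :=
  (∏ j ∈ Finset.range i, (x - j)) / (Nat.factorial i)

/-!
Write `T = T_S(A')`, cut by `H_e` into `T ∩ H_e⁺ = T_{S⁺}(A')`, `T ∩ H_e = T_S(A)` and
`T ∩ H_e⁻ = T_{S⁻}(A')`; say `T_S(A) ⊆ H_f⁺`. If `T ∩ H_e⁺` misses `H_f`, then `T ∩ H_e⁺ ∩ H_f⁻`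
and `T ∩ (H_e⁻ ∪ H_f⁺)` are disjoint, relatively open and cover the connected set `T`; the second
contains `T_S(A)`, so the first is empty and `T ∩ H_e⁺ ⊆ H_f⁺`. The normal of `H_e` is not in the
span of the normals of `A'`, so points of `T_S(A)` can be moved slightly inside `L_{A'}` to the
positive side of `H_e`; this puts `closure T_S(A)` inside the closure of `T ∩ H_e⁺`, so `H_f` bounds
that half. Finally `H_f` cannot cross both halves: `T ∩ H_f` is a connected stratum, so it would
meet `H_e`, whereas `T_S(A)` misses `H_f`.
-/

section Topology

variable {X : Type*} [TopologicalSpace X]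

theorem interior_closure_inter_of_isOpen_right {s U : Set X} (hU : IsOpen U) :
    interior (closure (s ∩ U)) = interior (closure s) ∩ interior (closure U) := by
  refine Subset.antisymm (subset_inter (interior_mono (closure_mono inter_subset_left))
    (interior_mono (closure_mono inter_subset_right))) ?_
  refine interior_maximal ?_ (isOpen_interior.inter isOpen_interior)
  calc interior (closure s) ∩ interior (closure U)
      ⊆ interior (closure s) ∩ closure U := inter_subset_inter_right _ interior_subset
    _ ⊆ closure (interior (closure s) ∩ U) := isOpen_interior.inter_closure
    _ ⊆ closure (closure s ∩ U) := closure_mono (inter_subset_inter_left _ interior_subset)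
    _ ⊆ closure (s ∩ U) := closure_minimal hU.closure_inter isClosed_closure

theorem inter_subset_left_of_isPreconnected_of_inter_subset_union {T U U' V V' W : Set X}
    (hT : IsPreconnected T) (hU : IsOpen U) (hU' : IsOpen U') (hV : IsOpen V) (hV' : IsOpen V')
    (hUU' : Disjoint U U') (hVV' : Disjoint V V') (hW : Wᶜ ⊆ U ∪ U')
    (hTW : (T ∩ W).Nonempty) (hTWV : T ∩ W ⊆ V) (hTU : T ∩ U ⊆ V ∪ V') : T ∩ U ⊆ V := by
  have hdisj : Disjoint (U ∩ V') (U' ∪ V) :=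
    disjoint_union_right.2 ⟨hUU'.mono_left inter_subset_left,
      hVV'.symm.mono_left inter_subset_right⟩
  have hcover : T ⊆ (U ∩ V') ∪ (U' ∪ V) := by
    intro x hx
    by_cases hxW : x ∈ W
    · exact Or.inr (Or.inr (hTWV ⟨hx, hxW⟩))
    · rcases hW hxW with hxU | hxU'
      · exact (hTU ⟨hx, hxU⟩).elim (fun h ↦ Or.inr (Or.inr h)) fun h ↦ Or.inl ⟨hxU, h⟩
      · exact Or.inr (Or.inl hxU')
  have hmeet : (T ∩ (U' ∪ V)).Nonempty :=
    hTW.mono fun x hx ↦ ⟨hx.1, Or.inr (hTWV hx)⟩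
  have hsub : T ⊆ U' ∪ V :=
    hT.subset_right_of_subset_union (hU.inter hV') (hU'.union hV) hdisj hcover hmeet
  exact fun x hx ↦ (hsub hx.1).resolve_left (disjoint_left.1 hUU' hx.2)

end Topology

theorem thickening_sep_subset {d : ℕ} {S : Set (Set (Fin d → ℝ))} {U : Set (Fin d → ℝ)}
    (hU : interior (closure U) = U) (hS : ∀ C ∈ S, C ⊆ U ∨ Disjoint C U) :
    thickening {C ∈ S | C ⊆ U} = thickening S ∩ U := by
  have hunion : ⋃ C ∈ {C ∈ S | C ⊆ U}, C = (⋃ C ∈ S, C) ∩ U := by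
    ext x
    simp only [mem_iUnion, mem_inter_iff, exists_prop]
    constructor
    · rintro ⟨C, ⟨hC, hCU⟩, hx⟩
      exact ⟨⟨C, hC, hx⟩, hCU hx⟩
    · rintro ⟨⟨C, hC, hx⟩, hxU⟩
      exact ⟨C, ⟨hC, (hS C hC).resolve_right (not_disjoint_iff.2 ⟨x, hx, hxU⟩)⟩, hx⟩
  have hopen : IsOpen U := hU ▸ isOpen_interior
  rw [thickening, hunion, interior_closure_inter_of_isOpen_right hopen, hU, thickening]

namespace Arrangement

variable {d n : ℕ} (𝓗 : Arrangement d n) {S : Set (Set (Fin d → ℝ))} {A : Finset (Fin n)}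
  {e f : Fin n}

section HalfSpaces

/-- The linear functional `x ↦ ∑ j, normal i j * x j`. The `i`-th hyperplane and its open
half-spaces are definitionally the preimages under it of `{offset i}`, `Ioi (offset i)` and
`Iio (offset i)`. -/
def functional (i : Fin n) : Module.Dual ℝ (Fin d → ℝ) :=
  dotProductEquiv ℝ (Fin d) (𝓗.normal i)

theorem continuous_functional (i : Fin n) : Continuous (𝓗.functional i) :=
  LinearMap.continuous_of_finiteDimensional _

theorem isOpenMap_functional (i : Fin n) : IsOpenMap (𝓗.functional i) :=
  LinearMap.isOpenMap_of_finiteDimensional _ <| LinearMap.surjective <|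
    (dotProductEquiv ℝ (Fin d)).map_ne_zero_iff.2 (𝓗.normal_ne i)

theorem isOpen_pos (i : Fin n) : IsOpen (𝓗.pos i) :=
  isOpen_Ioi.preimage (𝓗.continuous_functional i)

theorem isOpen_neg (i : Fin n) : IsOpen (𝓗.neg i) :=
  isOpen_Iio.preimage (𝓗.continuous_functional i)

theorem disjoint_pos_neg (i : Fin n) : Disjoint (𝓗.pos i) (𝓗.neg i) :=
  Ioi_disjoint_Iio_same.preimage (𝓗.functional i)

theorem compl_H (i : Fin n) : (𝓗.H i)ᶜ = 𝓗.pos i ∪ 𝓗.neg i :=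
  (congrArg (𝓗.functional i ⁻¹' ·) Iio_union_Ioi.symm).trans (union_comm _ _)

theorem disjoint_pos_H (i : Fin n) : Disjoint (𝓗.pos i) (𝓗.H i) :=
  subset_compl_iff_disjoint_right.1 (𝓗.compl_H i ▸ subset_union_left)

theorem disjoint_neg_H (i : Fin n) : Disjoint (𝓗.neg i) (𝓗.H i) :=
  subset_compl_iff_disjoint_right.1 (𝓗.compl_H i ▸ subset_union_right)

theorem interior_closure_pos (i : Fin n) : interior (closure (𝓗.pos i)) = 𝓗.pos i := by
  have hpos : 𝓗.pos i = 𝓗.functional i ⁻¹' Ioi (𝓗.offset i) := rfl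
  have hopen := 𝓗.isOpenMap_functional i
  have hcont := 𝓗.continuous_functional i
  rw [hpos, ← hopen.preimage_closure_eq_closure_preimage hcont,
    ← hopen.preimage_interior_eq_interior_preimage hcont, closure_Ioi, interior_Ici]

theorem inter_H_nonempty_of_isPreconnected {T : Set (Fin d → ℝ)} (hT : IsPreconnected T)
    (hpos : (T ∩ 𝓗.pos e).Nonempty) (hneg : (T ∩ 𝓗.neg e).Nonempty) :
    (T ∩ 𝓗.H e).Nonempty := by
  obtain ⟨x, hxT, hx⟩ := hpos
  obtain ⟨y, hyT, hy⟩ := hneg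
  exact hT.intermediate_value hyT hxT (𝓗.continuous_functional e).continuousOn ⟨hy.le, hx.le⟩

theorem subset_pos_or_subset_neg_of_mem_chambers {C : Set (Fin d → ℝ)} (hC : C ∈ 𝓗.chambers)
    (i : Fin n) : C ⊆ 𝓗.pos i ∨ C ⊆ 𝓗.neg i := by
  obtain ⟨x, -, rfl⟩ := hC
  refine isPreconnected_connectedComponentIn.subset_or_subset (𝓗.isOpen_pos i) (𝓗.isOpen_neg i)
    (𝓗.disjoint_pos_neg i) ?_
  rw [← compl_H]
  exact fun y hy ↦ connectedComponentIn_subset _ _ hy i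

end HalfSpaces

section Stratum

theorem stratum_insert (S : Set (Set (Fin d → ℝ))) (A : Finset (Fin n)) (i : Fin n) :
    𝓗.stratum S (insert i A) = 𝓗.stratum S A ∩ 𝓗.H i := by
  rw [stratum, stratum, Finset.set_biInter_insert, inter_comm (𝓗.H i), inter_assoc]

theorem stratum_erase_inter_H (heA : e ∈ A) :
    𝓗.stratum S (A.erase e) ∩ 𝓗.H e = 𝓗.stratum S A := by
  rw [← stratum_insert, Finset.insert_erase heA]

theorem stratum_sep_pos (hS : ∀ C ∈ S, C ⊆ 𝓗.pos e ∨ C ⊆ 𝓗.neg e) (A : Finset (Fin n)) :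
    𝓗.stratum {C ∈ S | C ⊆ 𝓗.pos e} A = 𝓗.stratum S A ∩ 𝓗.pos e := by
  have hdisj : ∀ C ∈ S, C ⊆ 𝓗.pos e ∨ Disjoint C (𝓗.pos e) := fun C hC ↦
    (hS C hC).imp_right (𝓗.disjoint_pos_neg e).symm.mono_left
  rw [stratum, stratum, thickening_sep_subset (𝓗.interior_closure_pos e) hdisj, inter_right_comm]

variable {𝓗} in
theorem Bounds.stratum_nonempty (hf : 𝓗.Bounds f S A) : (𝓗.stratum S A).Nonempty :=
  closure_nonempty_iff.1 (hf.2.mono fun _ hx ↦ hx.1.2)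

variable {𝓗} in
theorem Bounds.disjoint_stratum_H (hf : 𝓗.Bounds f S A) : Disjoint (𝓗.stratum S A) (𝓗.H f) :=
  hf.1.elim (𝓗.disjoint_pos_H f).mono_left (𝓗.disjoint_neg_H f).mono_left

variable {𝓗} in
theorem StrataConnected.isPreconnected_stratum (hS : 𝓗.StrataConnected S) (A : Finset (Fin n)) :
    IsPreconnected (𝓗.stratum S A) := by
  rcases (𝓗.stratum S A).eq_empty_or_nonempty with hA | hA
  · exact hA ▸ isPreconnected_empty
  · exact (hS A hA).isPreconnected

end Stratum

section Transversal

theorem exists_functional_pos (he : 𝓗.normal e ∉ Submodule.span ℝ (𝓗.normal '' A)) :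
    ∃ v, (∀ i ∈ A, 𝓗.functional i v = 0) ∧ 0 < 𝓗.functional e v := by
  obtain ⟨φ, hφe, hφA⟩ := Submodule.exists_le_ker_of_notMem he
  obtain ⟨v, rfl⟩ := (dotProductEquiv ℝ (Fin d)).surjective φ
  have hval : ∀ i, 𝓗.functional i v = v ⬝ᵥ 𝓗.normal i := fun i ↦
    dotProduct_comm (𝓗.normal i) v
  refine ⟨(v ⬝ᵥ 𝓗.normal e) • v, fun i hi ↦ ?_, ?_⟩
  · have hvi : v ⬝ᵥ 𝓗.normal i = 0 := hφA (Submodule.subset_span (mem_image_of_mem _ hi))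
    rw [map_smul, hval, hvi, smul_zero]
  · rw [map_smul, hval]
    exact mul_self_pos.2 hφe

variable {𝓗} in
theorem GeneralPosition.card_le (hgp : 𝓗.GeneralPosition) (hA : (⋂ i ∈ A, 𝓗.H i).Nonempty) :
    A.card ≤ d := by
  by_contra! hcard
  obtain ⟨B, hBA, hB⟩ := Finset.exists_subset_card_eq (Nat.succ_le_of_lt hcard)
  exact (hA.mono (biInter_subset_biInter_left hBA)).ne_empty (hgp.2 B hB)

variable {𝓗} in
theorem GeneralPosition.normal_notMem_span (hgp : 𝓗.GeneralPosition)
    (hA : (⋂ i ∈ A, 𝓗.H i).Nonempty) (heA : e ∈ A) :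
    𝓗.normal e ∉ Submodule.span ℝ (𝓗.normal '' (A.erase e)) := by
  have hind : LinearIndepOn ℝ 𝓗.normal (A : Set (Fin n)) := hgp.1 A (hgp.card_le hA)
  rw [Finset.coe_erase]
  exact hind.notMem_span heA

theorem closure_stratum_subset_closure_erase_inter_pos (heA : e ∈ A)
    (he : 𝓗.normal e ∉ Submodule.span ℝ (𝓗.normal '' (A.erase e))) :
    closure (𝓗.stratum S A) ⊆ closure (𝓗.stratum S (A.erase e) ∩ 𝓗.pos e) := by
  obtain ⟨v, hvA, hve⟩ := 𝓗.exists_functional_pos he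
  refine closure_minimal (fun x hx ↦ ?_) isClosed_closure
  rw [← 𝓗.stratum_erase_inter_H heA] at hx
  obtain ⟨⟨hxT, hxA⟩, hxe⟩ := hx
  have hcont : Continuous fun t : ℝ ↦ x + t • v := by fun_prop
  have hlim : Filter.Tendsto (fun t : ℝ ↦ x + t • v) (𝓝[>] 0) (𝓝 x) :=
    (hcont.tendsto' 0 x (by rw [zero_smul, add_zero])).mono_left nhdsWithin_le_nhds
  have hval : ∀ i (t : ℝ), 𝓗.functional i (x + t • v) =
      𝓗.functional i x + t * 𝓗.functional i v := fun i t ↦ by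
    rw [map_add, map_smul, smul_eq_mul]
  refine mem_closure_of_tendsto hlim ?_
  filter_upwards [hlim.eventually_mem (isOpen_interior.mem_nhds hxT), self_mem_nhdsWithin]
    with t htT ht
  refine ⟨⟨htT, mem_iInter₂.2 fun i hi ↦ ?_⟩, ?_⟩
  · have hxi : 𝓗.functional i x = 𝓗.offset i := mem_iInter₂.1 hxA i hi
    exact (hval i t).trans (by rw [hxi, hvA i hi, mul_zero, add_zero])
  · calc 𝓗.offset e = 𝓗.functional e x := hxe.symm
      _ < 𝓗.functional e x + t * 𝓗.functional e v := lt_add_of_pos_right _ (mul_pos ht hve)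
      _ = 𝓗.functional e (x + t • v) := (hval e t).symm

end Transversal

section Reverse

/-- The arrangement with the same hyperplanes and opposite orientations, used to carry over
statements about positive half-spaces to negative ones. -/
def reverse : Arrangement d n where
  normal i := -𝓗.normal i
  offset i := -𝓗.offset i
  normal_ne i := neg_ne_zero.2 (𝓗.normal_ne i)

theorem reverse_H (i : Fin n) : 𝓗.reverse.H i = 𝓗.H i := by
  simp [H, reverse]

theorem reverse_pos (i : Fin n) : 𝓗.reverse.pos i = 𝓗.neg i := by
  simp [pos, neg, reverse]

theorem reverse_neg (i : Fin n) : 𝓗.reverse.neg i = 𝓗.pos i := by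
  simp [pos, neg, reverse]

theorem reverse_stratum (S : Set (Set (Fin d → ℝ))) (A : Finset (Fin n)) :
    𝓗.reverse.stratum S A = 𝓗.stratum S A := by
  simp only [stratum, reverse_H]

theorem reverse_bounds : 𝓗.reverse.Bounds f S A ↔ 𝓗.Bounds f S A := by
  simp only [Bounds, reverse_stratum, reverse_H, reverse_pos, reverse_neg, or_comm]

theorem reverse_normal_mem_span_iff (A : Set (Fin n)) :
    𝓗.reverse.normal e ∈ Submodule.span ℝ (𝓗.reverse.normal '' A) ↔
      𝓗.normal e ∈ Submodule.span ℝ (𝓗.normal '' A) := by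
  have himage : 𝓗.reverse.normal '' A = -(𝓗.normal '' A) := by
    rw [← image_neg_eq_neg, image_image, reverse]
  rw [himage, Submodule.span_neg, reverse, neg_mem_iff]

end Reverse

section Halves

theorem stratum_sep_neg (hS : ∀ C ∈ S, C ⊆ 𝓗.pos e ∨ C ⊆ 𝓗.neg e) (A : Finset (Fin n)) :
    𝓗.stratum {C ∈ S | C ⊆ 𝓗.neg e} A = 𝓗.stratum S A ∩ 𝓗.neg e := by
  simpa only [reverse_stratum, reverse_pos] using 𝓗.reverse.stratum_sep_pos (e := e)
    (by simpa only [reverse_pos, reverse_neg, or_comm] using hS) A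

theorem bounds_sep_pos_or_inter_H_nonempty (hS : ∀ C ∈ S, C ⊆ 𝓗.pos e ∨ C ⊆ 𝓗.neg e)
    (heA : e ∈ A) (he : 𝓗.normal e ∉ Submodule.span ℝ (𝓗.normal '' (A.erase e)))
    (hconn : IsPreconnected (𝓗.stratum S (A.erase e))) (hf : 𝓗.Bounds f S A) :
    𝓗.Bounds f {C ∈ S | C ⊆ 𝓗.pos e} (A.erase e) ∨
      (𝓗.stratum {C ∈ S | C ⊆ 𝓗.pos e} (A.erase e) ∩ 𝓗.H f).Nonempty := by
  rw [Bounds, 𝓗.stratum_sep_pos hS, or_iff_not_imp_right, not_nonempty_iff_eq_empty,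
    ← disjoint_iff_inter_eq_empty, ← subset_compl_iff_disjoint_right, compl_H]
  intro hmiss
  have hwall := 𝓗.stratum_erase_inter_H (S := S) heA
  have hmeet : (𝓗.stratum S (A.erase e) ∩ 𝓗.H e).Nonempty := hwall ▸ hf.stratum_nonempty
  have hside : 𝓗.stratum S (A.erase e) ∩ 𝓗.pos e ⊆ 𝓗.pos f ∨
      𝓗.stratum S (A.erase e) ∩ 𝓗.pos e ⊆ 𝓗.neg f :=
    hf.1.imp
      (fun h ↦ inter_subset_left_of_isPreconnected_of_inter_subset_union hconn
        (𝓗.isOpen_pos e) (𝓗.isOpen_neg e) (𝓗.isOpen_pos f) (𝓗.isOpen_neg f)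
        (𝓗.disjoint_pos_neg e) (𝓗.disjoint_pos_neg f)
        (𝓗.compl_H e).subset hmeet (hwall.trans_subset h) hmiss)
      (fun h ↦ inter_subset_left_of_isPreconnected_of_inter_subset_union hconn
        (𝓗.isOpen_pos e) (𝓗.isOpen_neg e) (𝓗.isOpen_neg f) (𝓗.isOpen_pos f)
        (𝓗.disjoint_pos_neg e) (𝓗.disjoint_pos_neg f).symm
        (𝓗.compl_H e).subset hmeet (hwall.trans_subset h) (union_comm _ _ ▸ hmiss))
  exact ⟨hside, hf.2.mono <| inter_subset_inter
    (inter_subset_inter_right _ (𝓗.closure_stratum_subset_closure_erase_inter_pos heA he))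
    (biInter_subset_biInter_left (Finset.erase_subset e A))⟩

theorem bounds_sep_neg_or_inter_H_nonempty (hS : ∀ C ∈ S, C ⊆ 𝓗.pos e ∨ C ⊆ 𝓗.neg e)
    (heA : e ∈ A) (he : 𝓗.normal e ∉ Submodule.span ℝ (𝓗.normal '' (A.erase e)))
    (hconn : IsPreconnected (𝓗.stratum S (A.erase e))) (hf : 𝓗.Bounds f S A) :
    𝓗.Bounds f {C ∈ S | C ⊆ 𝓗.neg e} (A.erase e) ∨
      (𝓗.stratum {C ∈ S | C ⊆ 𝓗.neg e} (A.erase e) ∩ 𝓗.H f).Nonempty := by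
  simpa only [reverse_bounds, reverse_stratum, reverse_pos, reverse_H] using
    𝓗.reverse.bounds_sep_pos_or_inter_H_nonempty
      (by simpa only [reverse_pos, reverse_neg, or_comm] using hS) heA
      (by rwa [reverse_normal_mem_span_iff]) (by rwa [reverse_stratum])
      (𝓗.reverse_bounds.2 hf)

theorem not_inter_H_nonempty_sep_pos_and_sep_neg
    (hS : ∀ C ∈ S, C ⊆ 𝓗.pos e ∨ C ⊆ 𝓗.neg e) (heA : e ∈ A)
    (hconn : IsPreconnected (𝓗.stratum S (insert f (A.erase e))))
    (hf : Disjoint (𝓗.stratum S A) (𝓗.H f)) :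
    ¬((𝓗.stratum {C ∈ S | C ⊆ 𝓗.pos e} (A.erase e) ∩ 𝓗.H f).Nonempty ∧
      (𝓗.stratum {C ∈ S | C ⊆ 𝓗.neg e} (A.erase e) ∩ 𝓗.H f).Nonempty) := by
  rw [𝓗.stratum_sep_pos hS, 𝓗.stratum_sep_neg hS, inter_right_comm,
    inter_right_comm _ (𝓗.neg e), ← stratum_insert]
  rintro ⟨hpos, hneg⟩
  have hmeet := 𝓗.inter_H_nonempty_of_isPreconnected hconn hpos hneg
  rw [stratum_insert, inter_right_comm, 𝓗.stratum_erase_inter_H heA] at hmeet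
  exact hmeet.ne_empty hf.inter_eq

end Halves

end Arrangement

theorem stmt4_general {d n : ℕ} (𝓗 : Arrangement d n) {S : Set (Set (Fin d → ℝ))}
    {A : Finset (Fin n)} {e f : Fin n} (hS : ∀ C ∈ S, C ⊆ 𝓗.pos e ∨ C ⊆ 𝓗.neg e) (heA : e ∈ A)
    (he : 𝓗.normal e ∉ Submodule.span ℝ (𝓗.normal '' (A.erase e)))
    (hconn : IsPreconnected (𝓗.stratum S (A.erase e)))
    (hconn_f : IsPreconnected (𝓗.stratum S (insert f (A.erase e))))
    (hf : 𝓗.Bounds f S A) :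
    (𝓗.Bounds f {C ∈ S | C ⊆ 𝓗.pos e} (A.erase e) ∧
        𝓗.Bounds f {C ∈ S | C ⊆ 𝓗.neg e} (A.erase e)) ∨
    (𝓗.Bounds f {C ∈ S | C ⊆ 𝓗.pos e} (A.erase e) ∧
        (𝓗.stratum {C ∈ S | C ⊆ 𝓗.neg e} (A.erase e) ∩ 𝓗.H f).Nonempty) ∨
    (𝓗.Bounds f {C ∈ S | C ⊆ 𝓗.neg e} (A.erase e) ∧
        (𝓗.stratum {C ∈ S | C ⊆ 𝓗.pos e} (A.erase e) ∩ 𝓗.H f).Nonempty) := by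
  have hpos := 𝓗.bounds_sep_pos_or_inter_H_nonempty hS heA he hconn hf
  have hneg := 𝓗.bounds_sep_neg_or_inter_H_nonempty hS heA he hconn hf
  have hnot_both :=
    𝓗.not_inter_H_nonempty_sep_pos_and_sep_neg hS heA hconn_f hf.disjoint_stratum_H
  tauto

/-- Let `S` be strata-connected, let `H_e` intersect `T_S`, let
`A ∈ supp S` with `e ∈ A`, and set `A' := A \ {e}`. If `H_f` bounds `T_S(A)`, then
either `H_f` bounds both `T_{S⁺}(A')` and `T_{S⁻}(A')`, or it bounds one of them and
intersects the other. -/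
theorem stmt4 {d n : ℕ} (𝓗 : Arrangement d n) (hgp : 𝓗.GeneralPosition)
    (S : Set (Set (Fin d → ℝ))) (hS : S ⊆ 𝓗.chambers)
    (hsc : 𝓗.StrataConnected S)
    (e : Fin n) (hint : (thickening S ∩ 𝓗.H e).Nonempty)
    (A : Finset (Fin n)) (hA : A ∈ 𝓗.supp S) (heA : e ∈ A)
    (f : Fin n) (hf : 𝓗.Bounds f S A) :
    (𝓗.Bounds f {C ∈ S | C ⊆ 𝓗.pos e} (A.erase e) ∧
        𝓗.Bounds f {C ∈ S | C ⊆ 𝓗.neg e} (A.erase e)) ∨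
    (𝓗.Bounds f {C ∈ S | C ⊆ 𝓗.pos e} (A.erase e) ∧
        (𝓗.stratum {C ∈ S | C ⊆ 𝓗.neg e} (A.erase e) ∩ 𝓗.H f).Nonempty) ∨
    (𝓗.Bounds f {C ∈ S | C ⊆ 𝓗.neg e} (A.erase e) ∧
        (𝓗.stratum {C ∈ S | C ⊆ 𝓗.pos e} (A.erase e) ∩ 𝓗.H f).Nonempty) := by
  exact stmt4_general 𝓗 (fun C hC ↦ 𝓗.subset_pos_or_subset_neg_of_mem_chambers (hS hC) e) heA
    (hgp.normal_notMem_span (hA.mono inter_subset_right) heA)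
    (hsc.isPreconnected_stratum _) (hsc.isPreconnected_stratum _) hf
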